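/- Let r_1 ≥ r_2 ≥ r_3 be rationals in (0,1) satisfying the non-realizability condition: no coprime positive integers m > a ≥ 1 satisfy 1/r_1 > m/a, 1/r_2 > m/(m-a), and 1/r_3 > m simultaneously. Let k ≥ 1 and T ≥ 3 be integers. If 1/r_1 > (k(T-1)-(k-1))/((k-1)(T-1)-(k-2)) and 1/r_2 > k + 1/(T-2), then 1/r_3 ≤ k(T-2) + 1. -/

import Mathlib

/-!
Put `n = T - 2`. The bounds on `1 / r₁`, `1 / r₂` and `1 / r₃` are then exactly `m / a`,
`m / (m - a)` and `m` for the pair `m = k * n + 1`, `a = (k - 1) * n + 1`, which has `m - a = n`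
and is coprime by `(1 - k) * m + k * a = 1`. So if `1 / r₃` exceeded its bound, this pair would
realize the triple.
-/

theorem isCoprime_mul_add_one_sub_one_mul_add_one {R : Type*} [CommRing R] (k n : R) :
    IsCoprime (k * n + 1) ((k - 1) * n + 1) :=
  ⟨1 - k, k, by ring⟩

section Realizability

variable {K : Type*} [Field K] [LinearOrder K]

/-- Realizability of a triple of Seifert invariants, in terms of their reciprocals
`x = 1 / r₁`, `y = 1 / r₂`, `z = 1 / r₃`: all three strictly exceed `m / a`, `m / (m - a)`, `m`
for some coprime `m > a ≥ 1`. With reciprocals as the parameters, only the positive integers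
`a` and `m - a` occur as denominators. -/
def IsRealizable (x y z : K) : Prop :=
  ∃ m a : ℤ, 1 ≤ a ∧ a < m ∧ IsCoprime m a ∧
    (m : K) / a < x ∧ (m : K) / ((m : K) - a) < y ∧ (m : K) < z

variable [IsStrictOrderedRing K] {x y z : K} {k : ℤ}

theorem isRealizable_of_lt {n : ℤ} (hk : 1 ≤ k) (hn : 0 < n)
    (hx : ((k : K) * n + 1) / (((k : K) - 1) * n + 1) < x)
    (hy : (k : K) + 1 / n < y) (hz : (k : K) * n + 1 < z) : IsRealizable x y z := by
  have one_le_a : 1 ≤ (k - 1) * n + 1 :=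
    le_add_of_nonneg_left (mul_nonneg (sub_nonneg.mpr hk) hn.le)
  have a_lt_m : (k - 1) * n + 1 < k * n + 1 := by linarith
  have hn_ne : (n : K) ≠ 0 := Int.cast_ne_zero.mpr hn.ne'
  have m_div_m_sub_a :
      ((k : K) * n + 1) / ((k : K) * n + 1 - (((k : K) - 1) * n + 1)) = k + 1 / n := by
    rw [show (k : K) * n + 1 - (((k : K) - 1) * n + 1) = n by ring, add_div,
      mul_div_cancel_right₀ _ hn_ne]
  refine ⟨k * n + 1, (k - 1) * n + 1, one_le_a, a_lt_m,
    isCoprime_mul_add_one_sub_one_mul_add_one k n, ?_⟩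
  push_cast
  exact ⟨hx, m_div_m_sub_a.trans_lt hy, hz⟩

theorem Lspace_condition_ii_general {T : ℤ} (h : ¬IsRealizable x y z) (hk : 1 ≤ k) (hT : 3 ≤ T)
    (hx : ((k : K) * ((T : K) - 1) - ((k : K) - 1))
        / (((k : K) - 1) * ((T : K) - 1) - ((k : K) - 2)) < x)
    (hy : (k : K) + 1 / ((T : K) - 2) < y) :
    z ≤ (k : K) * ((T : K) - 2) + 1 := by
  have numerator : (k : K) * (T - 1) - (k - 1) = k * (T - 2) + 1 := by ring
  have denominator : ((k : K) - 1) * (T - 1) - (k - 2) = (k - 1) * (T - 2) + 1 := by ring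
  have cast_n : ((T - 2 : ℤ) : K) = T - 2 := by norm_cast
  rw [numerator, denominator] at hx
  by_contra! hz
  rw [← cast_n] at hx hy hz
  exact h (isRealizable_of_lt hk (by linarith) hx hy hz)

end Realizability

/-- L-space condition (ii): if `1/r_1 > (k(T-1)-(k-1))/((k-1)(T-1)-(k-2))` and
`1/r_2 > k + 1/(T-2)`, then `1/r_3 ≤ k(T-2)+1`. -/
theorem Lspace_condition_ii (r1 r2 r3 : ℚ) (h0 : 0 < r3) (h32 : r3 ≤ r2) (h21 : r2 ≤ r1)
    (h1 : r1 < 1)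
    (hL : ∀ m a : ℤ, 1 ≤ a → a < m → IsCoprime m a →
      ¬((m : ℚ) / a < 1 / r1 ∧ (m : ℚ) / ((m : ℚ) - a) < 1 / r2 ∧ (m : ℚ) < 1 / r3))
    (k T : ℤ) (hk : 1 ≤ k) (hT : 3 ≤ T)
    (hr1 : ((k : ℚ) * ((T : ℚ) - 1) - ((k : ℚ) - 1))
        / (((k : ℚ) - 1) * ((T : ℚ) - 1) - ((k : ℚ) - 2)) < 1 / r1)
    (hr2 : (k : ℚ) + 1 / ((T : ℚ) - 2) < 1 / r2) :
    1 / r3 ≤ (k : ℚ) * ((T : ℚ) - 2) + 1 :=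
  Lspace_condition_ii_general
    (fun ⟨m, a, one_le_a, a_lt_m, coprime, lt⟩ => hL m a one_le_a a_lt_m coprime lt) hk hT hr1 hr2
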